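/- arXiv:1409.1275 — 7 statements merged into one kernel-verified Lean document; each statement's English description precedes it below -/
import Mathlib

section
/- Let A be a commutative ring and B an A-algebra which is finite and free as an A-module. Let C := B ⊗_A B, m : C → B the multiplication map, J := ker m, and 𝒟 := m(Ann_C(J)). Then 𝒟 is contained in the different ideal δ_{B/A}; that is, for every x ∈ Ann_C(J) and every A-linear form f : B → A, the element m(x)·f (for the B-module structure (b·f)(y)=f(by) on Hom_A(B,A)) lies in the image of the trace map τ_{B/A}. -/
open scoped TensorProduct

/-!
A linear form `f : B → A` turns `u ⊗ v` into the rank-one endomorphism `z ↦ f (u z) v` of `B`, whose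
trace is `f (u v)`. If `x` annihilates the kernel of multiplication, then
`x (z ⊗ 1) = x (1 ⊗ z)`, so the endomorphism of `x` is multiplication by some `b`, and that of
`x (y ⊗ 1)` is multiplication by `b y`. The trace of the latter is `f (m x * y) = Tr (b y)`.
-/

section Semiring

variable {A B : Type*} [CommSemiring A] [Semiring B] [Algebra A B]

/-- Contraction of `B ⊗[A] B` along the bilinear form `(u, z) ↦ f (u * z)`: it sends `u ⊗ₜ v` to the
endomorphism `z ↦ f (u * z) • v`. It realizes values of `f` on products as traces. -/
noncomputable def contractionEnd (f : B →ₗ[A] A) : B ⊗[A] B →ₗ[A] Module.End A B :=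
  dualTensorHom A B B ∘ₗ ((LinearMap.mul A B).compr₂ f).rTensor B

theorem contractionEnd_mul_tmul (f : B →ₗ[A] A) (x : B ⊗[A] B) (z w : B) :
    contractionEnd f (x * z ⊗ₜ[A] w) =
      LinearMap.mulRight A w ∘ₗ contractionEnd f x ∘ₗ LinearMap.mulLeft A z := by
  induction x with
  | zero => simp
  | add x₁ x₂ h₁ h₂ => simp only [add_mul, map_add, h₁, h₂, LinearMap.add_comp, LinearMap.comp_add]
  | tmul u v => ext t; simp [contractionEnd, mul_assoc]

theorem contractionEnd_apply_eq_mul {x : B ⊗[A] B}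
    (hx : ∀ z : B, x * z ⊗ₜ[A] 1 = x * 1 ⊗ₜ[A] z) (f : B →ₗ[A] A) (z : B) :
    contractionEnd f x z = contractionEnd f x 1 * z :=
  calc
    contractionEnd f x z = contractionEnd f (x * z ⊗ₜ[A] 1) 1 := by
      simp [contractionEnd_mul_tmul]
    _ = contractionEnd f (x * 1 ⊗ₜ[A] z) 1 := by rw [hx]
    _ = contractionEnd f x 1 * z := by simp [contractionEnd_mul_tmul]

theorem contractionEnd_mul_tmul_one_eq_lmul {x : B ⊗[A] B}
    (hx : ∀ z : B, x * z ⊗ₜ[A] 1 = x * 1 ⊗ₜ[A] z) (f : B →ₗ[A] A) (y : B) :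
    contractionEnd f (x * y ⊗ₜ[A] 1) = Algebra.lmul A B (contractionEnd f x 1 * y) := by
  ext z
  simp [contractionEnd_mul_tmul, contractionEnd_apply_eq_mul hx f (y * z), mul_assoc]

theorem mul'_mul_one_tmul (x : B ⊗[A] B) (y : B) :
    LinearMap.mul' A B (x * 1 ⊗ₜ[A] y) = LinearMap.mul' A B x * y := by
  induction x with
  | zero => simp
  | add x₁ x₂ h₁ h₂ => simp only [add_mul, map_add, h₁, h₂]
  | tmul u v => simp [mul_assoc]

end Semiring

theorem mul_tmul_one_eq_mul_one_tmul {A B : Type*} [CommSemiring A] [Ring B] [Algebra A B]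
    {x : B ⊗[A] B} (hx : ∀ j ∈ LinearMap.ker (LinearMap.mul' A B), x * j = 0) (z : B) :
    x * z ⊗ₜ[A] 1 = x * 1 ⊗ₜ[A] z := by
  rw [← sub_eq_zero, ← mul_sub]
  exact hx _ (by simp)

theorem trace_contractionEnd {A B : Type*} [CommRing A] [Ring B] [Algebra A B]
    [Module.Finite A B] [Module.Free A B] (f : B →ₗ[A] A) (x : B ⊗[A] B) :
    LinearMap.trace A B (contractionEnd f x) = f (LinearMap.mul' A B x) := by
  induction x with
  | zero => simp
  | add x₁ x₂ h₁ h₂ => simp only [map_add, h₁, h₂]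
  | tmul u v => simp [contractionEnd, LinearMap.trace_eq_contract_apply]

theorem different_contains_D_general
    {A B : Type*} [CommRing A] [Ring B] [Algebra A B]
    [Module.Finite A B] [Module.Free A B]
    (x : B ⊗[A] B)
    (hx : ∀ j ∈ LinearMap.ker (LinearMap.mul' A B), x * j = 0)
    (f : B →ₗ[A] A) :
    ∃ b : B, ∀ y : B,
      f (LinearMap.mul' A B x * y) = LinearMap.trace A B (Algebra.lmul A B (b * y)) := by
  have hcomm := mul_tmul_one_eq_mul_one_tmul hx
  refine ⟨contractionEnd f x 1, fun y ↦ ?_⟩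
  calc
    f (LinearMap.mul' A B x * y) = f (LinearMap.mul' A B (x * y ⊗ₜ[A] 1)) := by
      rw [hcomm, mul'_mul_one_tmul]
    _ = LinearMap.trace A B (contractionEnd f (x * y ⊗ₜ[A] 1)) := (trace_contractionEnd f _).symm
    _ = LinearMap.trace A B (Algebra.lmul A B (contractionEnd f x 1 * y)) := by
      rw [contractionEnd_mul_tmul_one_eq_lmul hcomm]

/-- Let `A` be a commutative ring and `B` an `A`-algebra which is finite and
free as an `A`-module.  Let `C := B ⊗[A] B`, `m : C → B` the multiplication map, `J := ker m`.
Then `𝒟 := m(Ann_C J)` is contained in the different ideal `δ_{B/A}`: for every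
`x ∈ Ann_C J` and every `A`-linear form `f : B → A`, the element `m x · f` (for the `B`-module
structure `(b · f) y = f (b * y)` on `Hom_A(B, A)`) lies in the image of the trace map
`τ_{B/A}`, i.e. there is `b : B` with `f (m x * y) = Tr_{B/A} (b * y)` for all `y`. -/
theorem different_contains_D
    {A B : Type*} [CommRing A] [CommRing B] [Algebra A B]
    [Module.Finite A B] [Module.Free A B]
    (x : B ⊗[A] B)
    (hx : ∀ j ∈ RingHom.ker (Algebra.TensorProduct.lmul' A : B ⊗[A] B →ₐ[A] B), x * j = 0)
    (f : B →ₗ[A] A) :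
    ∃ b : B, ∀ y : B,
      f (Algebra.TensorProduct.lmul' A (S := B) x * y) = Algebra.trace A B (b * y) :=
  different_contains_D_general x hx f
end

section
/- Let A be a commutative ring and B an A-algebra which is finite and free as an A-module. Then the different ideal δ_{B/A} annihilates the kernel of the trace map: for every x ∈ δ_{B/A} and every b ∈ B with τ_{B/A}(b) = 0, one has x·b = 0. -/
/-!
For `x` in the different, every functional `f (x * ·)` lies in the image of `τ`, so it vanishes on
the common zeros of that image. By symmetry of the trace form these common zeros are `ker τ`, and
functionals on a free module separate points; hence `x` kills `ker τ`.
-/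

open LinearMap in
theorem dualCoannihilator_range_dualMap_eq_ker {A M N : Type*} [CommSemiring A]
    [AddCommMonoid M] [Module A M] [AddCommMonoid N] [Module A N]
    (hN : Function.Injective (Module.Dual.eval A N)) (φ : M →ₗ[A] N) :
    (range φ.dualMap).dualCoannihilator = ker φ := by
  have flip_dualMap : φ.dualMap.flip = Module.Dual.eval A N ∘ₗ φ := rfl
  rw [dualCoannihilator_range_eq_ker_flip, flip_dualMap,
    ker_comp_of_ker_eq_bot φ (ker_eq_bot_of_injective hN)]

open LinearMap in
theorem ker_flip_le_ker_of_range_dualMap_le_range {A M N P : Type*} [CommSemiring A]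
    [AddCommMonoid M] [Module A M] [AddCommMonoid N] [Module A N] [AddCommMonoid P] [Module A P]
    (hN : Function.Injective (Module.Dual.eval A N)) {β : P →ₗ[A] M →ₗ[A] A} {φ : M →ₗ[A] N}
    (h : range φ.dualMap ≤ range β) : ker β.flip ≤ ker φ :=
  calc ker β.flip = (range β).dualCoannihilator := (dualCoannihilator_range_eq_ker_flip β).symm
    _ ≤ (range φ.dualMap).dualCoannihilator := Submodule.dualCoannihilator_anti h
    _ = ker φ := dualCoannihilator_range_dualMap_eq_ker hN φ

-- `Algebra.trace` takes the junk value `0` when `B` has no finite basis; with an arbitrary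
-- functional `t` the result also covers the actual trace of a finite locally free algebra.
theorem different_annihilates_ker_trace_general {A B : Type*} [CommSemiring A] [Semiring B]
    [Algebra A B] (hB : Function.Injective (Module.Dual.eval A B)) (t : B →ₗ[A] A) (x : B)
    (hx : ∀ f : B →ₗ[A] A, ∃ c : B, ∀ y : B, f (x * y) = t (c * y))
    (b : B) (hb : ∀ y : B, t (y * b) = 0) :
    x * b = 0 := by
  let β : B →ₗ[A] B →ₗ[A] A := (LinearMap.mul A B).compr₂ t
  have range_le : LinearMap.range (LinearMap.mulLeft A x).dualMap ≤ LinearMap.range β := by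
    rintro _ ⟨f, rfl⟩
    obtain ⟨c, hc⟩ := hx f
    exact ⟨c, LinearMap.ext fun y ↦ (hc y).symm⟩
  have b_mem : b ∈ LinearMap.ker β.flip := LinearMap.ext hb
  exact ker_flip_le_ker_of_range_dualMap_le_range hB range_le b_mem

/-- Let `A` be a commutative ring and `B` an `A`-algebra which is finite and
free as an `A`-module.  Then the different ideal `δ_{B/A}` annihilates the kernel of the trace
map `τ_{B/A} : B → Hom_A(B, A)`, `τ_{B/A}(b)(y) = Tr_{B/A}(b * y)`: if `x ∈ δ_{B/A}` (i.e.
for every `f : Hom_A(B, A)` the element `x · f` lies in the image of `τ_{B/A}`) and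
`τ_{B/A}(b) = 0`, then `x * b = 0`. -/
theorem different_annihilates_ker_trace
    {A B : Type*} [CommRing A] [CommRing B] [Algebra A B]
    [Module.Finite A B] [Module.Free A B]
    (x : B)
    (hx : ∀ f : B →ₗ[A] A, ∃ b : B, ∀ y : B, f (x * y) = Algebra.trace A B (b * y))
    (b : B) (hb : ∀ y : B, Algebra.trace A B (b * y) = 0) :
    x * b = 0 :=
  different_annihilates_ker_trace_general (Module.eval_apply_injective A) (Algebra.trace A B) x hx b
    fun y ↦ mul_comm b y ▸ hb y
end

section
/- Let A be a commutative ring and B an A-algebra which is finite and free as an A-module. Let C := B ⊗_A B, m : C → B the multiplication map, J := ker m, and 𝒟 := m(Ann_C(J)). Then Ann_B(ker τ_{B/A}) · δ_{B/A} ⊆ 𝒟: if x ∈ B satisfies x·(ker τ_{B/A}) = 0 and y ∈ δ_{B/A}, then xy ∈ 𝒟. -/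
open scoped TensorProduct

/-!
`A`-linear maps `φ : B* → B` correspond to tensors `c ∈ B ⊗ B` via `c = ∑ φ(eᵢ*) ⊗ eᵢ`, where
`∑ eᵢ* ⊗ eᵢ` is the tensor of `id_B` under `B* ⊗ B ≅ End_A B`. If `φ` is `B`-linear, then `c`
annihilates `J` and `m c = φ Tr`, because `∑ eᵢ • eᵢ* = Tr`. If `x` annihilates `ker τ` and `y` lies
in the different, then sending `f` to `x * b` for any `b` with `y • f = τ b` is a well-defined
`B`-linear map `B* → B`, and its value at `Tr` is `x * y`.
-/

open Module LinearMap

section FiniteProjective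

variable (A M : Type*) [CommSemiring A] [AddCommMonoid M] [Module A M]
  [Module.Finite A M] [Projective A M]

/-- The tensor `∑ eᵢ* ⊗ eᵢ` of a finite projective module, for any dual basis `(eᵢ, eᵢ*)`; it is
encoded without a choice of dual basis, as the preimage of the identity in `M* ⊗ M ≅ End M`. -/
noncomputable def canonicalTensor : Dual A M ⊗[A] M :=
  (dualTensorHomEquiv A M M).symm LinearMap.id

/-- The trace of an endomorphism of a finite projective module, as the contraction of the
corresponding tensor in `M* ⊗ M`. Unlike `LinearMap.trace`, which is zero if there is no finite
basis, it is the intended trace for every such module. -/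
noncomputable def projectiveTrace : End A M →ₗ[A] A :=
  contractLeft A M ∘ₗ (dualTensorHomEquiv A M M).symm.toLinearMap

variable {A M}

theorem dualTensorHom_canonicalTensor :
    dualTensorHom A M M (canonicalTensor A M) = LinearMap.id :=
  (dualTensorHomEquiv A M M).apply_symm_apply LinearMap.id

theorem dualTensorHom_lTensor_canonicalTensor (g : End A M) :
    dualTensorHom A M M (g.lTensor (Dual A M) (canonicalTensor A M)) = g := by
  rw [← comp_apply, dualTensorHom_comp_lTensor, comp_apply, dualTensorHom_canonicalTensor]
  rfl

theorem lTensor_canonicalTensor (g : End A M) :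
    g.lTensor (Dual A M) (canonicalTensor A M) = g.dualMap.rTensor M (canonicalTensor A M) := by
  apply dualTensorHom_bijective.injective
  rw [dualTensorHom_lTensor_canonicalTensor, ← comp_apply (dualTensorHom A M M),
    dualTensorHom_comp_rTensor_dualMap, comp_apply, dualTensorHom_canonicalTensor]
  rfl

theorem projectiveTrace_apply (g : End A M) :
    projectiveTrace A M g =
      contractLeft A M (g.lTensor (Dual A M) (canonicalTensor A M)) := by
  rw [projectiveTrace, comp_apply, LinearEquiv.coe_coe]
  congr 1
  rw [LinearEquiv.symm_apply_eq]
  exact (dualTensorHom_lTensor_canonicalTensor g).symm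

end FiniteProjective

theorem trace_eq_projectiveTrace {A M : Type*} [CommRing A] [AddCommGroup M] [Module A M]
    [Module.Finite A M] [Module.Free A M] : LinearMap.trace A M = projectiveTrace A M :=
  trace_eq_contract' A M

/-- The trace form `Tr ∈ B*` of a finite projective algebra: the trace of multiplication by an
element, in the sense of `projectiveTrace`. -/
noncomputable def projectiveAlgebraTrace (A B : Type*) [CommSemiring A] [CommSemiring B]
    [Algebra A B] [Module.Finite A B] [Projective A B] : Dual A B :=
  projectiveTrace A B ∘ₗ LinearMap.mul A B

theorem algebraTrace_eq_projectiveAlgebraTrace {A B : Type*} [CommRing A] [CommRing B] [Algebra A B]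
    [Module.Finite A B] [Module.Free A B] : Algebra.trace A B = projectiveAlgebraTrace A B :=
  congrArg (· ∘ₗ LinearMap.mul A B) trace_eq_projectiveTrace

section TensorMul

variable {A B C : Type*} [CommSemiring A] [Semiring B] [Algebra A B] [Semiring C] [Algebra A C]

theorem one_tmul_mul_eq_lTensor (c : C) (t : B ⊗[A] C) :
    (1 ⊗ₜ c) * t = (mulLeft A c).lTensor B t := by
  induction t with
  | zero => simp
  | tmul u v => simp
  | add s t hs ht => rw [mul_add, hs, ht, map_add]

theorem tmul_one_mul_eq_rTensor (b : B) (t : B ⊗[A] C) :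
    (b ⊗ₜ 1) * t = (mulLeft A b).rTensor C t := by
  induction t with
  | zero => simp
  | tmul u v => simp
  | add s t hs ht => rw [mul_add, hs, ht, map_add]

end TensorMul

theorem mul_eq_zero_of_mem_ker_lmul' {A B : Type*} [CommRing A] [CommRing B] [Algebra A B]
    {c j : B ⊗[A] B} (hc : ∀ b : B, (1 ⊗ₜ b) * c = (b ⊗ₜ 1) * c)
    (hj : j ∈ RingHom.ker (Algebra.TensorProduct.lmul' A : B ⊗[A] B →ₐ[A] B)) : c * j = 0 := by
  suffices RingHom.ker (Algebra.TensorProduct.lmul' A : B ⊗[A] B →ₐ[A] B) ≤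
      LinearMap.ker (mulLeft (B ⊗[A] B) c) from this hj
  refine (KaehlerDifferential.span_range_eq_ideal A B).symm.trans_le (Ideal.span_le.2 ?_)
  rintro _ ⟨b, rfl⟩
  rw [SetLike.mem_coe, LinearMap.mem_ker, mulLeft_apply, mul_comm, sub_mul, hc, sub_self]

section DualAction

variable {A B : Type*} [CommSemiring A] [CommSemiring B] [Algebra A B]

variable (A B) in
/-- The action `f ⊗ b ↦ b • f = (z ↦ f (b z))` of `B` on `B*`, as a linear map on `B* ⊗ B`. -/
noncomputable def dualAction : Dual A B ⊗[A] B →ₗ[A] Dual A B :=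
  TensorProduct.lift (Dual.transpose ∘ₗ LinearMap.mul A B).flip

theorem dualAction_apply (t : Dual A B ⊗[A] B) (z : B) :
    dualAction A B t z = contractLeft A B ((mulLeft A z).lTensor (Dual A B) t) := by
  induction t with
  | zero => simp
  | tmul f b => simp [dualAction, Dual.transpose_apply, mul_comm z]
  | add s t hs ht => rw [map_add, LinearMap.add_apply, hs, ht, map_add, map_add]

/-- `B`-linearity of an `A`-linear map `φ : B* → B`, with `b : B` acting on `B*` by the transpose of
multiplication by `b`. It is a predicate because `Dual A B` carries no `B`-module structure. -/
def IsAlgebraLinear (φ : Dual A B →ₗ[A] B) : Prop :=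
  ∀ b, φ ∘ₗ (mulLeft A b).dualMap = mulLeft A b ∘ₗ φ

theorem lmul'_comp_rTensor {φ : Dual A B →ₗ[A] B} (hφ : IsAlgebraLinear φ) :
    (Algebra.TensorProduct.lmul' A (S := B)).toLinearMap ∘ₗ φ.rTensor B = φ ∘ₗ dualAction A B := by
  ext f b
  calc φ f * b
    _ = b * φ f := mul_comm _ _
    _ = φ ((mulLeft A b).dualMap f) := (LinearMap.congr_fun (hφ b) f).symm

end DualAction

section TensorOfDualHom

variable {A B : Type*} [CommSemiring A] [CommSemiring B] [Algebra A B] [Module.Finite A B]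
  [Projective A B]

/-- The tensor `∑ φ(eᵢ*) ⊗ eᵢ` corresponding to `φ : B* → B` under `Hom(B*, B) ≅ B ⊗ B`. -/
noncomputable def tensorOfDualHom (φ : Dual A B →ₗ[A] B) : B ⊗[A] B :=
  φ.rTensor B (canonicalTensor A B)

theorem dualAction_canonicalTensor :
    dualAction A B (canonicalTensor A B) = projectiveAlgebraTrace A B := by
  ext z
  rw [dualAction_apply, ← projectiveTrace_apply]
  rfl

variable {φ : Dual A B →ₗ[A] B}

theorem one_tmul_mul_tensorOfDualHom (hφ : IsAlgebraLinear φ) (b : B) :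
    (1 ⊗ₜ b) * tensorOfDualHom φ = (b ⊗ₜ 1) * tensorOfDualHom φ :=
  calc (1 ⊗ₜ b) * tensorOfDualHom φ
    _ = φ.rTensor B ((mulLeft A b).lTensor (Dual A B) (canonicalTensor A B)) := by
      rw [one_tmul_mul_eq_lTensor, tensorOfDualHom, ← comp_apply, ← comp_apply,
        lTensor_comp_rTensor, rTensor_comp_lTensor]
    _ = (φ ∘ₗ (mulLeft A b).dualMap).rTensor B (canonicalTensor A B) := by
      rw [lTensor_canonicalTensor, rTensor_comp_apply]
    _ = (b ⊗ₜ 1) * tensorOfDualHom φ := by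
      rw [hφ, rTensor_comp_apply, tmul_one_mul_eq_rTensor, tensorOfDualHom]

theorem lmul'_tensorOfDualHom (hφ : IsAlgebraLinear φ) :
    Algebra.TensorProduct.lmul' A (S := B) (tensorOfDualHom φ) =
      φ (projectiveAlgebraTrace A B) := by
  rw [← dualAction_canonicalTensor]
  exact LinearMap.congr_fun (lmul'_comp_rTensor hφ) (canonicalTensor A B)

end TensorOfDualHom

theorem exists_linearMap_dual_apply_eq_mul {A B : Type*} [CommRing A] [CommRing B] [Algebra A B]
    {t : Dual A B} {x y : B} (hx : ∀ b, (∀ z, t (b * z) = 0) → x * b = 0)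
    (hy : ∀ f : Dual A B, ∃ b, ∀ z, f (y * z) = t (b * z)) :
    ∃ φ : Dual A B →ₗ[A] B, ∀ f b, (∀ z, f (y * z) = t (b * z)) → φ f = x * b := by
  have mul_eq_mul {u v : B} (h : ∀ z, t (u * z) = t (v * z)) : x * u = x * v := by
    rw [← sub_eq_zero, ← mul_sub]
    exact hx _ fun z => by rw [sub_mul, map_sub, h, sub_self]
  choose β hβ using hy
  have well_defined (f : Dual A B) (b : B) (hb : ∀ z, f (y * z) = t (b * z)) :
      x * β f = x * b := mul_eq_mul fun z => (hβ f z).symm.trans (hb z)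
  refine ⟨{ toFun := fun f => x * β f, map_add' := fun f g => ?_, map_smul' := fun a f => ?_ },
    well_defined⟩
  · rw [← mul_add]
    exact well_defined _ _ fun z => by simp only [add_mul, map_add, LinearMap.add_apply, ← hβ]
  · rw [RingHom.id_apply, ← mul_smul_comm]
    exact well_defined _ _ fun z => by
      simp only [smul_mul_assoc, map_smul, LinearMap.smul_apply, ← hβ]

theorem isAlgebraLinear_of_apply_eq_mul
    {A B : Type*} [CommSemiring A] [CommSemiring B] [Algebra A B]
    {t : Dual A B} {x y : B} (hy : ∀ f : Dual A B, ∃ b, ∀ z, f (y * z) = t (b * z))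
    {φ : Dual A B →ₗ[A] B} (hφ : ∀ f b, (∀ z, f (y * z) = t (b * z)) → φ f = x * b) :
    IsAlgebraLinear φ := by
  intro b
  ext f
  obtain ⟨u, hu⟩ := hy f
  have hbu (z : B) : (mulLeft A b).dualMap f (y * z) = t (b * u * z) := by
    rw [dualMap_apply, mulLeft_apply, mul_left_comm, hu, mul_left_comm, mul_assoc]
  rw [comp_apply, comp_apply, mulLeft_apply, hφ _ _ hbu, hφ _ _ hu, mul_left_comm]

theorem ann_ker_trace_mul_different_subset_D_general
    {A B : Type*} [CommRing A] [CommRing B] [Algebra A B] [Module.Finite A B] [Projective A B]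
    (x : B) (hx : ∀ b : B, (∀ z : B, projectiveAlgebraTrace A B (b * z) = 0) → x * b = 0)
    (y : B)
    (hy : ∀ f : Dual A B, ∃ b : B, ∀ z : B, f (y * z) = projectiveAlgebraTrace A B (b * z)) :
    ∃ c : B ⊗[A] B,
      (∀ j ∈ RingHom.ker (Algebra.TensorProduct.lmul' A : B ⊗[A] B →ₐ[A] B), c * j = 0) ∧
      Algebra.TensorProduct.lmul' A (S := B) c = x * y := by
  obtain ⟨φ, hφ⟩ := exists_linearMap_dual_apply_eq_mul hx hy
  have hφ_linear : IsAlgebraLinear φ := isAlgebraLinear_of_apply_eq_mul hy hφ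
  refine ⟨tensorOfDualHom φ, fun j hj => ?_, ?_⟩
  · exact mul_eq_zero_of_mem_ker_lmul' (one_tmul_mul_tensorOfDualHom hφ_linear) hj
  · rw [lmul'_tensorOfDualHom hφ_linear]
    exact hφ _ y fun _ => rfl

/-- Let `A` be a commutative ring and `B` an `A`-algebra which is finite and
free as an `A`-module.  Let `C := B ⊗[A] B`, `m : C → B` the multiplication map, `J := ker m`
and `𝒟 := m(Ann_C J)`.  Then `Ann_B(ker τ_{B/A}) · δ_{B/A} ⊆ 𝒟`: if `x : B` annihilates the
kernel of the trace map `τ_{B/A}` and `y ∈ δ_{B/A}`, then `x * y ∈ 𝒟`, i.e. `x * y = m c` for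
some `c` annihilating `J`. -/
theorem ann_ker_trace_mul_different_subset_D
    {A B : Type*} [CommRing A] [CommRing B] [Algebra A B]
    [Module.Finite A B] [Module.Free A B]
    (x : B)
    (hx : ∀ b : B, (∀ z : B, Algebra.trace A B (b * z) = 0) → x * b = 0)
    (y : B)
    (hy : ∀ f : B →ₗ[A] A, ∃ b : B, ∀ z : B, f (y * z) = Algebra.trace A B (b * z)) :
    ∃ c : B ⊗[A] B,
      (∀ j ∈ RingHom.ker (Algebra.TensorProduct.lmul' A : B ⊗[A] B →ₐ[A] B), c * j = 0) ∧
      Algebra.TensorProduct.lmul' A (S := B) c = x * y := by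
  rw [algebraTrace_eq_projectiveAlgebraTrace] at hx hy
  exact ann_ker_trace_mul_different_subset_D_general x hx y hy
end

section
/- Let A be a commutative ring and B an A-algebra which is finite and free as an A-module. Let C := B ⊗_A B, m : C → B the multiplication map, J := ker m, and 𝒟 := m(Ann_C(J)). If the trace map τ_{B/A} : B → Hom_A(B,A) is injective, then the different ideal equals 𝒟: δ_{B/A} = 𝒟. -/
open scoped TensorProduct

/-!
Contracting the first tensor factor identifies `B ⊗[A] B` with `Hom_A(B*, B)`, and under this
identification the annihilator of `J` becomes `Hom_B(B*, B)`. Writing the trace in terms of a basis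
shows that a `B`-linear `φ : B* → B` coming from `c` sends the trace to `m c`; so `𝒟` is the set of
values `φ Tr`.

If `τ` is injective and `x` lies in the different, then `f ↦ τ⁻¹ (x · f)` is such a `φ`, with value
`x` at the trace. Conversely, if `c` annihilates `J`, contracting one factor of `c` against `f` and
the other against `τ y` gives the same element of `A` in either order: contracting `f` first yields
`Tr (φ f * y)`, and contracting `τ y` first yields `f (m c * y)`, because the flip of `c` also
annihilates `J`. Hence `m c · f = τ (φ f)`.
-/

open Module

section Contraction

variable {R M N : Type*} [CommSemiring R] [AddCommMonoid M] [Module R M]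
  [AddCommMonoid N] [Module R N]

variable (R M N) in
/-- The natural map `M ⊗ N → Hom (M*, N)` contracting the first tensor factor, so that a tensor
can be handled through its values on linear forms. -/
noncomputable def tensorContraction : M ⊗[R] N →ₗ[R] Dual R M →ₗ[R] N :=
  dualTensorHom R (Dual R M) N ∘ₗ (Dual.eval R M).rTensor N

@[simp]
theorem tensorContraction_tmul (m : M) (n : N) (f : Dual R M) :
    tensorContraction R M N (m ⊗ₜ n) f = f m • n := by
  simp [tensorContraction]

theorem tensorContraction_bijective [Module.Finite R M] [Projective R M] :
    Function.Bijective (tensorContraction R M N) :=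
  dualTensorHom_bijective.comp ((evalEquiv R M).rTensor N).bijective

theorem apply_tensorContraction_comm (c : M ⊗[R] N) (f : Dual R M) (g : Dual R N) :
    f (tensorContraction R N M (TensorProduct.comm R M N c) g) =
      g (tensorContraction R M N c f) := by
  induction c with
  | zero => simp
  | add c d hc hd => simp only [map_add, LinearMap.add_apply, hc, hd]
  | tmul m n => simp [mul_comm]

end Contraction

section Multiplication

variable {R S : Type*} [CommSemiring R] [CommSemiring S] [Algebra R S]

theorem tensorContraction_mul_tmul (c : S ⊗[R] S) (a b : S) (f : Dual R S) :
    tensorContraction R S S (c * (a ⊗ₜ b)) f =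
      b * tensorContraction R S S c (f ∘ₗ LinearMap.mulLeft R a) := by
  induction c with
  | zero => simp
  | add c d hc hd => simp only [add_mul, map_add, LinearMap.add_apply, hc, hd, mul_add]
  | tmul x y => simp [mul_comm]

theorem sum_basis_mul_tensorContraction_coord {ι : Type*} [Fintype ι] (e : Basis ι R S)
    (c : S ⊗[R] S) :
    ∑ i, e i * tensorContraction R S S c (e.coord i) = Algebra.TensorProduct.lmul' R c := by
  induction c with
  | zero => simp
  | add c d hc hd =>
    simp only [map_add, LinearMap.add_apply, mul_add, Finset.sum_add_distrib, hc, hd]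
  | tmul x y =>
    simp only [tensorContraction_tmul, mul_smul_comm, ← smul_mul_assoc, ← Finset.sum_mul,
      Basis.coord_apply, e.sum_repr, Algebra.TensorProduct.lmul'_apply_tmul]

theorem lmul'_comm (c : S ⊗[R] S) :
    Algebra.TensorProduct.lmul' R (TensorProduct.comm R S S c) =
      Algebra.TensorProduct.lmul' R c := by
  induction c with
  | zero => simp
  | add c d hc hd => simp only [map_add, hc, hd]
  | tmul x y => simp [mul_comm]

end Multiplication

section Differents

variable {A B : Type*} [CommRing A] [CommRing B] [Algebra A B]

theorem mem_annihilator_ideal_iff {c : B ⊗[A] B} :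
    c ∈ (KaehlerDifferential.ideal A B).annihilator ↔
      ∀ b : B, c * (1 ⊗ₜ b) = c * (b ⊗ₜ 1) := by
  simp [← KaehlerDifferential.span_range_eq_ideal, Ideal.span, Submodule.mem_annihilator_span,
    mul_sub, sub_eq_zero]

theorem mem_annihilator_ideal_iff_tensorContraction [Module.Finite A B] [Projective A B]
    {c : B ⊗[A] B} :
    c ∈ (KaehlerDifferential.ideal A B).annihilator ↔
      ∀ (b : B) (f : Dual A B), tensorContraction A B B c (f ∘ₗ LinearMap.mulLeft A b) =
        b * tensorContraction A B B c f := by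
  simp only [mem_annihilator_ideal_iff, ← tensorContraction_bijective.injective.eq_iff,
    LinearMap.ext_iff, tensorContraction_mul_tmul, LinearMap.mulLeft_one, LinearMap.comp_id,
    one_mul, eq_comm]

theorem comm_mem_annihilator_ideal {c : B ⊗[A] B}
    (hc : c ∈ (KaehlerDifferential.ideal A B).annihilator) :
    TensorProduct.comm A B B c ∈ (KaehlerDifferential.ideal A B).annihilator := by
  rw [mem_annihilator_ideal_iff] at hc ⊢
  intro b
  change Algebra.TensorProduct.comm A B B c * _ = Algebra.TensorProduct.comm A B B c * _
  simpa using congr_arg (Algebra.TensorProduct.comm A B B) (hc b).symm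

theorem trace_eq_sum_coord_comp_mulLeft {ι : Type*} [Fintype ι] (e : Basis ι A B) :
    Algebra.trace A B = ∑ i, e.coord i ∘ₗ LinearMap.mulLeft A (e i) := by
  classical
  ext y
  simp [Algebra.trace_eq_matrix_trace e, Matrix.trace, Algebra.leftMulMatrix_eq_repr_mul, mul_comm]

theorem tensorContraction_trace [Module.Finite A B] [Module.Free A B] {c : B ⊗[A] B}
    (hc : c ∈ (KaehlerDifferential.ideal A B).annihilator) :
    tensorContraction A B B c (Algebra.trace A B) = Algebra.TensorProduct.lmul' A c := by
  let e := Free.chooseBasis A B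
  rw [mem_annihilator_ideal_iff_tensorContraction] at hc
  simp only [trace_eq_sum_coord_comp_mulLeft e, map_sum, hc,
    sum_basis_mul_tensorContraction_coord]

variable (A B) in
/-- The different ideal `δ_{B/A}`, the annihilator of the cokernel of `τ = Algebra.traceForm A B`.
The `B`-module structure `b · f` on `Dual A B` is written `f ∘ₗ LinearMap.mulLeft A b`. -/
noncomputable def traceDifferent : Ideal B where
  carrier := {x | ∀ f : Dual A B, f ∘ₗ LinearMap.mulLeft A x ∈ (Algebra.traceForm A B).range}
  zero_mem' f := by simp
  add_mem' {x y} hx hy f := by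
    have hadd : f ∘ₗ LinearMap.mulLeft A (x + y) =
        f ∘ₗ LinearMap.mulLeft A x + f ∘ₗ LinearMap.mulLeft A y := by
      ext; simp [add_mul]
    exact hadd ▸ add_mem (hx f) (hy f)
  smul_mem' b x hx f := by
    simpa only [smul_eq_mul, LinearMap.mulLeft_mul, LinearMap.comp_assoc] using
      hx (f ∘ₗ LinearMap.mulLeft A b)

theorem mem_traceDifferent {x : B} :
    x ∈ traceDifferent A B ↔
      ∀ f : Dual A B, ∃ b : B, ∀ y : B, f (x * y) = Algebra.trace A B (b * y) := by
  change (∀ f : Dual A B, ∃ b : B, Algebra.traceForm A B b = f ∘ₗ LinearMap.mulLeft A x) ↔ _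
  simp [LinearMap.ext_iff, eq_comm]

variable (A B) in
/-- The ideal `𝒟 = m (Ann J)`, known as the Noether different, where `m` is the multiplication
`B ⊗[A] B → B` and `J` its kernel, which Mathlib calls `KaehlerDifferential.ideal A B`. -/
noncomputable def noetherDifferent : Ideal B :=
  (KaehlerDifferential.ideal A B).annihilator.map (Algebra.TensorProduct.lmul' A (S := B))

theorem mem_noetherDifferent {x : B} :
    x ∈ noetherDifferent A B ↔ ∃ c ∈ (KaehlerDifferential.ideal A B).annihilator,
      Algebra.TensorProduct.lmul' A c = x :=
  Ideal.mem_map_iff_of_surjective _ fun b => ⟨b ⊗ₜ 1, by simp⟩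

variable [Module.Finite A B] [Module.Free A B]

theorem noetherDifferent_le_traceDifferent : noetherDifferent A B ≤ traceDifferent A B := by
  intro x hx
  obtain ⟨c, hc, rfl⟩ := mem_noetherDifferent.mp hx
  refine mem_traceDifferent.mpr fun f => ⟨tensorContraction A B B c f, fun y => ?_⟩
  have hc' := comm_mem_annihilator_ideal hc
  have hflip : tensorContraction A B B (TensorProduct.comm A B B c)
      (Algebra.trace A B ∘ₗ LinearMap.mulLeft A y) = y * Algebra.TensorProduct.lmul' A c := by
    rw [mem_annihilator_ideal_iff_tensorContraction.mp hc', tensorContraction_trace hc', lmul'_comm]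
  calc f (Algebra.TensorProduct.lmul' A c * y)
      = f (tensorContraction A B B (TensorProduct.comm A B B c)
          (Algebra.trace A B ∘ₗ LinearMap.mulLeft A y)) := by rw [hflip, mul_comm]
    _ = Algebra.trace A B (y * tensorContraction A B B c f) :=
        apply_tensorContraction_comm c f _
    _ = Algebra.trace A B (tensorContraction A B B c f * y) := by rw [mul_comm]

theorem traceDifferent_le_noetherDifferent
    (hτ : Function.Injective (Algebra.traceForm A B)) :
    traceDifferent A B ≤ noetherDifferent A B := by
  intro x hx
  let φ : Dual A B →ₗ[A] B :=
    (LinearEquiv.ofInjective _ hτ).symm ∘ₗ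
      (LinearMap.lcomp A A (LinearMap.mulLeft A x)).codRestrict _ hx
  have hφ (f : Dual A B) : Algebra.traceForm A B (φ f) = f ∘ₗ LinearMap.mulLeft A x :=
    congr_arg Subtype.val (LinearEquiv.apply_symm_apply (LinearEquiv.ofInjective _ hτ) _)
  obtain ⟨c, hcφ⟩ := tensorContraction_bijective.surjective φ
  have hc : c ∈ (KaehlerDifferential.ideal A B).annihilator := by
    refine mem_annihilator_ideal_iff_tensorContraction.mpr fun b f => hτ ?_
    ext y
    calc Algebra.traceForm A B (tensorContraction A B B c (f ∘ₗ LinearMap.mulLeft A b)) y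
        = f (b * (x * y)) := by rw [hcφ, hφ]; rfl
      _ = f (x * (b * y)) := by rw [mul_left_comm]
      _ = Algebra.traceForm A B (φ f) (b * y) := by rw [hφ]; rfl
      _ = Algebra.traceForm A B (b * tensorContraction A B B c f) y := by
        rw [hcφ, Algebra.traceForm_apply, Algebra.traceForm_apply, mul_left_comm, mul_assoc]
  refine mem_noetherDifferent.mpr ⟨c, hc, hτ ?_⟩
  calc Algebra.traceForm A B (Algebra.TensorProduct.lmul' A c)
      = Algebra.traceForm A B (φ (Algebra.trace A B)) := by rw [← tensorContraction_trace hc, hcφ]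
    _ = Algebra.traceForm A B x := hφ _

end Differents

/-- Let `A` be a commutative ring and `B` an `A`-algebra which is finite and
free as an `A`-module.  Let `C := B ⊗[A] B`, `m : C → B` the multiplication map, `J := ker m`
and `𝒟 := m(Ann_C J)`.  If the trace map `τ_{B/A} : B → Hom_A(B, A)` is injective, then the
different ideal equals `𝒟`: an element `x : B` satisfies `x · f ∈ im τ_{B/A}` for all
`f : Hom_A(B, A)` if and only if `x = m c` for some `c` annihilating `J`. -/
theorem different_eq_D_of_injective_trace
    {A B : Type*} [CommRing A] [CommRing B] [Algebra A B]
    [Module.Finite A B] [Module.Free A B]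
    (hinj : ∀ b : B, (∀ y : B, Algebra.trace A B (b * y) = 0) → b = 0) :
    ∀ x : B,
      (∀ f : B →ₗ[A] A, ∃ b : B, ∀ y : B, f (x * y) = Algebra.trace A B (b * y)) ↔
      (∃ c : B ⊗[A] B,
        (∀ j ∈ RingHom.ker (Algebra.TensorProduct.lmul' A : B ⊗[A] B →ₐ[A] B), c * j = 0) ∧
        Algebra.TensorProduct.lmul' A (S := B) c = x) := by
  have hτ : Function.Injective (Algebra.traceForm A B) :=
    (injective_iff_map_eq_zero _).mpr fun b hb => hinj b fun y => LinearMap.congr_fun hb y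
  have heq : traceDifferent A B = noetherDifferent A B :=
    (traceDifferent_le_noetherDifferent hτ).antisymm noetherDifferent_le_traceDifferent
  intro x
  rw [← mem_traceDifferent, heq, mem_noetherDifferent]
  simp only [Submodule.mem_annihilator, smul_eq_mul]
end

section
/- Let A be a commutative ring and B an A-algebra which is finite and free as an A-module. Let C := B ⊗_A B, regarded as a B-algebra via the map b ↦ 1 ⊗ b (so C is finite and free as a B-module), let m : C → B be the multiplication map and J := ker m. Then for every x ∈ Ann_C(J), the trace over B of the B-linear endomorphism of C given by multiplication by x equals m(x): Tr_{C/B}(x) = m(x). -/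
open scoped TensorProduct

/- Since `c - 1 ⊗ m c` lies in `J` for every `c : C`, an element `x` annihilating `J` satisfies
`x * c = m c • x`. Multiplication by `x` is therefore the rank-one endomorphism `c ↦ m c • x`, whose
trace is `m x`. -/

theorem eq_smulRight_of_ker_le_ker {R M N : Type*} [Ring R] [AddCommGroup M] [Module R M]
    [AddCommGroup N] [Module R N] {φ : M →ₗ[R] R} {f : M →ₗ[R] N} {e : M} (he : φ e = 1)
    (hf : φ.ker ≤ f.ker) : f = φ.smulRight (f e) := by
  ext v
  have hv : v - φ v • e ∈ φ.ker := by simp [he]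
  simpa [sub_eq_zero] using hf hv

theorem trace_eq_of_ker_le_ker {R M : Type*} [CommRing R] [AddCommGroup M] [Module R M]
    [Module.Finite R M] [Module.Free R M] {φ : M →ₗ[R] R} {f : M →ₗ[R] M} {e : M}
    (he : φ e = 1) (hf : φ.ker ≤ f.ker) : LinearMap.trace R M f = φ (f e) :=
  calc
    LinearMap.trace R M f = LinearMap.trace R M (φ.smulRight (f e)) :=
      congrArg _ (eq_smulRight_of_ker_le_ker he hf)
    _ = φ (f e) := LinearMap.trace_smulRight φ (f e)

theorem trace_eq_of_mul_ker_eq_zero {R C : Type*} [CommRing R] [CommRing C] [Algebra R C]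
    [Module.Finite R C] [Module.Free R C] (ε : C →ₐ[R] R) {x : C}
    (hx : ∀ j ∈ RingHom.ker ε, x * j = 0) : Algebra.trace R C x = ε x := by
  have hker : ε.toLinearMap.ker ≤ (Algebra.lmul R C x).ker := hx
  simpa [Algebra.trace_apply] using trace_eq_of_ker_le_ker (map_one ε) hker

section RightAlgebra

attribute [local instance] Algebra.TensorProduct.rightAlgebra

section Module

variable (R S T : Type*) [CommSemiring R] [Semiring S] [CommSemiring T] [Algebra R S] [Algebra R T]

theorem finite_rightAlgebra [Module.Finite R S] : Module.Finite T (S ⊗[R] T) :=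
  Module.Finite.equiv (Algebra.TensorProduct.commRight R T S).toLinearEquiv

theorem free_rightAlgebra [Module.Free R S] : Module.Free T (S ⊗[R] T) :=
  Module.Free.of_equiv (Algebra.TensorProduct.commRight R T S).toLinearEquiv

end Module

open Algebra.TensorProduct in
theorem trace_of_ann_eq_mul_general {R S T : Type*} [CommRing R] [CommRing S] [CommRing T]
    [Algebra R S] [Algebra R T] [Module.Finite R S] [Module.Free R S] (f : S →ₐ[R] T)
    (x : S ⊗[R] T) (hx : ∀ j ∈ RingHom.ker (productMap f (AlgHom.id R T)), x * j = 0) :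
    Algebra.trace T (S ⊗[R] T) x = productMap f (AlgHom.id R T) x := by
  have := finite_rightAlgebra R S T
  have := free_rightAlgebra R S T
  let ε : S ⊗[R] T →ₐ[T] T :=
    { productMap f (AlgHom.id R T) with
      commutes' := fun t ↦ by simp [right_algebraMap_apply] }
  exact trace_eq_of_mul_ker_eq_zero ε hx

end RightAlgebra

/-- Let `A` be a commutative ring and `B` an `A`-algebra which is finite and
free as an `A`-module.  Regard `C := B ⊗[A] B` as a `B`-algebra via `b ↦ 1 ⊗ b` (so `C` is
finite and free as a `B`-module), let `m : C → B` be the multiplication map and `J := ker m`.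
Then for every `x ∈ Ann_C J`, the trace over `B` of multiplication by `x` on `C` equals
`m x`:  `Tr_{C/B} x = m x`. -/
theorem trace_of_ann_eq_mul
    {A B : Type*} [CommRing A] [CommRing B] [Algebra A B]
    [Module.Finite A B] [Module.Free A B]
    (x : B ⊗[A] B)
    (hx : ∀ j ∈ RingHom.ker (Algebra.TensorProduct.lmul' A : B ⊗[A] B →ₐ[A] B), x * j = 0) :
    letI : Algebra B (B ⊗[A] B) :=
      (Algebra.TensorProduct.includeRight (R := A) (A := B) (B := B)).toRingHom.toAlgebra
    Algebra.trace B (B ⊗[A] B) x = Algebra.TensorProduct.lmul' A (S := B) x := by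
  exact trace_of_ann_eq_mul_general (AlgHom.id A B) x hx
end

section
/- Let A be a commutative ring and B an A-algebra which is finite and free as an A-module. Let C := B ⊗_A B, m : C → B the multiplication map, J := ker m, and 𝒟 := m(Ann_C(J)). Then for every b₀ ∈ B the following are equivalent: (1) b₀ ∈ 𝒟; (2) there exists a C-linear map s : B → C (where B is a C-module via m and C acts on itself by multiplication) such that m(s(b)) = b₀·b for all b ∈ B. (This expresses that the annihilator of the extension class of 0 → J → C → B → 0 in Ext¹_C(B,J) is m⁻¹(𝒟).) -/
open scoped TensorProduct

/-!
Let `f : C → B` be surjective. Then `B ≅ C ⧸ ker f` is cyclic as a `C`-module, generated by `1`, so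
a `C`-linear map `s : B → C` is determined by `s 1`, which can be any element of `C` killed by
`ker f`. Moreover `f ∘ s` is `C`-linear, hence is multiplication by `f (s 1)`.
-/

theorem lmul'_surjective (A B : Type*) [CommSemiring A] [CommSemiring B] [Algebra A B] :
    Function.Surjective (Algebra.TensorProduct.lmul' A (S := B)) :=
  fun b ↦ ⟨b ⊗ₜ[A] 1, by rw [Algebra.TensorProduct.lmul'_apply_tmul, mul_one]⟩

theorem exists_linearMap_comp_eq_of_ker_le_ker {R M N P : Type*} [Ring R] [AddCommGroup M]
    [AddCommGroup N] [AddCommGroup P] [Module R M] [Module R N] [Module R P] {f : M →ₗ[R] N}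
    (hf : Function.Surjective f) {g : M →ₗ[R] P} (h : LinearMap.ker f ≤ LinearMap.ker g) :
    ∃ k : N →ₗ[R] P, k ∘ₗ f = g := by
  refine ⟨(LinearMap.ker f).liftQ g h ∘ₗ (f.quotKerEquivOfSurjective hf).symm.toLinearMap, ?_⟩
  ext m
  simp

theorem exists_linearMap_apply_map_eq_mul {A B C : Type*} [CommRing A] [Ring B] [CommRing C]
    [Algebra A B] [Algebra A C] {f : C →ₐ[A] B} (hf : Function.Surjective f) {x : C}
    (hx : x ∈ (RingHom.ker f).annihilator) :
    ∃ s : B →ₗ[A] C, ∀ c : C, s (f c) = c * x := by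
  have ker_le : LinearMap.ker f.toLinearMap ≤ LinearMap.ker (LinearMap.mulRight A x) :=
    fun j hj ↦ (mul_comm j x).trans (Submodule.mem_annihilator.1 hx j hj)
  obtain ⟨s, hs⟩ := exists_linearMap_comp_eq_of_ker_le_ker hf ker_le
  exact ⟨s, LinearMap.congr_fun hs⟩

theorem apply_one_mem_annihilator_ker {A B C : Type*} [CommSemiring A] [Semiring B]
    [CommSemiring C] [Algebra A B] [Algebra A C] {f : C →ₐ[A] B} {s : B →ₗ[A] C}
    (hs : ∀ (c : C) (b : B), s (f c * b) = c * s b) :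
    s 1 ∈ (RingHom.ker f).annihilator := by
  refine Submodule.mem_annihilator.2 fun j hj ↦ ?_
  calc s 1 * j = s (f j * 1) := by rw [hs, mul_comm]
    _ = 0 := by rw [RingHom.mem_ker.1 hj, zero_mul, map_zero]

theorem mem_D_iff_exists_section_general {A B C : Type*} [CommRing A] [CommRing B]
    [CommRing C] [Algebra A B] [Algebra A C] {f : C →ₐ[A] B} (hf : Function.Surjective f) (b₀ : B) :
    (∃ x : C, (∀ j ∈ RingHom.ker f, x * j = 0) ∧ f x = b₀) ↔
      ∃ s : B →ₗ[A] C,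
        (∀ (c : C) (b : B), s (f c * b) = c * s b) ∧ ∀ b : B, f (s b) = b₀ * b := by
  constructor
  · rintro ⟨x, hx, rfl⟩
    obtain ⟨s, hs⟩ := exists_linearMap_apply_map_eq_mul hf (Submodule.mem_annihilator.2 hx)
    refine ⟨s, fun c ↦ hf.forall.2 fun d ↦ ?_, hf.forall.2 fun c ↦ ?_⟩
    · rw [← map_mul, hs, hs, mul_assoc]
    · rw [hs, map_mul, mul_comm]
  · rintro ⟨s, hs, hfs⟩
    exact ⟨s 1, Submodule.mem_annihilator.1 (apply_one_mem_annihilator_ker hs),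
      by rw [hfs, mul_one]⟩

/-- Let `A` be a commutative ring and `B` an `A`-algebra which is finite and
free as an `A`-module.  Let `C := B ⊗[A] B`, `m : C → B` the multiplication map, `J := ker m`
and `𝒟 := m(Ann_C J)`.  Then for `b₀ : B` the following are equivalent: (1) `b₀ ∈ 𝒟`;
(2) there is a `C`-linear map `s : B → C` (where `B` is a `C`-module via `m`, so `C`-linearity
of the `A`-linear map `s` means `s (m c * b) = c * s b`) with `m (s b) = b₀ * b` for all `b`.
This expresses that the annihilator of the class of `0 → J → C → B → 0` in `Ext¹_C(B, J)` is
`m⁻¹ 𝒟`. -/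
theorem mem_D_iff_exists_section
    {A B : Type*} [CommRing A] [CommRing B] [Algebra A B]
    [Module.Finite A B] [Module.Free A B] (b₀ : B) :
    (∃ x : B ⊗[A] B,
        (∀ j ∈ RingHom.ker (Algebra.TensorProduct.lmul' A : B ⊗[A] B →ₐ[A] B), x * j = 0) ∧
        Algebra.TensorProduct.lmul' A (S := B) x = b₀) ↔
    (∃ s : B →ₗ[A] B ⊗[A] B,
        (∀ (c : B ⊗[A] B) (b : B), s (Algebra.TensorProduct.lmul' A (S := B) c * b) = c * s b) ∧
        (∀ b : B, Algebra.TensorProduct.lmul' A (S := B) (s b) = b₀ * b)) :=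
  mem_D_iff_exists_section_general (lmul'_surjective A B) b₀
end

section
/- Let A be a commutative ring and B an A-algebra which is finite and free as an A-module. Let C := B ⊗_A B, m : C → B the multiplication map, J := ker m, and 𝒟 := m(Ann_C(J)). Then 𝒟 annihilates all higher Ext groups of B over C: for every C-module N, every integer i ≥ 1, and every x ∈ Ann_C(J), the endomorphism of Ext^i_C(B, N) induced (by functoriality in the first argument) by the C-linear endomorphism of B given by multiplication by m(x) is zero. -/
open scoped TensorProduct

open CategoryTheory

universe u

/-!
If `p : P → M` is a surjection with `P` projective and `x` kills `ker p`, then multiplication by `x`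
on `P` descends to a map `s : M → P` with `p ∘ s = x`. Multiplication by `x` on `M` thus factors
through a projective module, and so acts as zero on `Ext^i(M, N)` for `i ≥ 1`. The theorem is the
case where `p` is the multiplication map `m : C → B`, with `P = C` free of rank one.
-/

theorem mk₀_comp_comp_eq_zero_of_projective
    {𝒜 : Type*} [Category* 𝒜] [Abelian 𝒜] [HasExt 𝒜] {X P Y Z : 𝒜} [Projective P]
    (f : X ⟶ P) (g : P ⟶ Y) {i : ℕ} (hi : 1 ≤ i) (e : Abelian.Ext Y Z i) :
    (Abelian.Ext.mk₀ (f ≫ g)).comp e (zero_add i) = 0 := by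
  obtain ⟨n, rfl⟩ := Nat.exists_eq_add_of_le' hi
  rw [← Abelian.Ext.mk₀_comp_mk₀_assoc,
    Abelian.Ext.eq_zero_of_projective ((Abelian.Ext.mk₀ g).comp e _), Abelian.Ext.comp_zero]

section Module

variable {R : Type*} [CommRing R]

theorem exists_comp_eq_smul_id_of_mem_annihilator_ker
    {P M : Type*} [AddCommGroup P] [Module R P] [AddCommGroup M] [Module R M]
    {p : P →ₗ[R] M} (hp : Function.Surjective p) {x : R} (hx : x ∈ p.ker.annihilator) :
    ∃ s : M →ₗ[R] P, p ∘ₗ s = x • LinearMap.id := by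
  have ker_le : p.ker ≤ (x • LinearMap.id : P →ₗ[R] P).ker := Submodule.mem_annihilator.mp hx
  refine ⟨p.ker.liftQ (x • LinearMap.id) ker_le ∘ₗ (p.quotKerEquivOfSurjective hp).symm, ?_⟩
  refine (LinearMap.cancel_right hp).mp (LinearMap.ext fun y => ?_)
  have symm_apply : (p.quotKerEquivOfSurjective hp).symm (p y) = p.ker.mkQ y :=
    (LinearEquiv.symm_apply_eq _).mpr rfl
  simp [symm_apply]

universe v

theorem D_annihilates_higher_ext_general [HasExt (ModuleCat.{v} R)]
    {P M N : Type v} [AddCommGroup P] [Module R P] [Module.Projective R P]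
    [AddCommGroup M] [Module R M] [AddCommGroup N] [Module R N]
    {p : P →ₗ[R] M} (hp : Function.Surjective p) {x : R} (hx : x ∈ p.ker.annihilator)
    {i : ℕ} (hi : 1 ≤ i) (e : Abelian.Ext (ModuleCat.of R M) (ModuleCat.of R N) i) :
    (Abelian.Ext.mk₀ (ModuleCat.ofHom (x • LinearMap.id : M →ₗ[R] M))).comp e
      (zero_add i) = 0 := by
  obtain ⟨s, hs⟩ := exists_comp_eq_smul_id_of_mem_annihilator_ker hp hx
  rw [← hs, ModuleCat.ofHom_comp]
  exact mk₀_comp_comp_eq_zero_of_projective (ModuleCat.ofHom s) (ModuleCat.ofHom p) hi e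

end Module

/-- Let `A` be a commutative ring and `B` an `A`-algebra which is finite and
free as an `A`-module.  Let `C := B ⊗[A] B`, `m : C → B` the multiplication map, `J := ker m`
and `𝒟 := m(Ann_C J)`.  Then `𝒟` annihilates all higher Ext groups of `B` over `C`: for every
`C`-module `N`, every `i ≥ 1` and every `x ∈ Ann_C J`, the endomorphism of `Ext^i_C(B, N)`
induced (by functoriality in the first argument) by the `C`-linear endomorphism of `B` given
by multiplication by `m x` is zero (`B` being a `C`-module via `m`). -/
theorem D_annihilates_higher_ext
    {A B : Type u} [CommRing A] [CommRing B] [Algebra A B]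
    [Module.Finite A B] [Module.Free A B]
    (N : Type u) [AddCommGroup N] [Module (B ⊗[A] B) N]
    (i : ℕ) (hi : 1 ≤ i)
    (x : B ⊗[A] B)
    (hx : ∀ j ∈ RingHom.ker (Algebra.TensorProduct.lmul' A : B ⊗[A] B →ₐ[A] B), x * j = 0) :
    letI : Algebra (B ⊗[A] B) B :=
      (Algebra.TensorProduct.lmul' A : B ⊗[A] B →ₐ[A] B).toRingHom.toAlgebra
    letI : HasDerivedCategory (ModuleCat (B ⊗[A] B)) := HasDerivedCategory.standard _
    haveI : HasExt (ModuleCat (B ⊗[A] B)) := hasExt_of_hasDerivedCategory _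
    ∀ e : Abelian.Ext (ModuleCat.of (B ⊗[A] B) B) (ModuleCat.of (B ⊗[A] B) N) i,
      (Abelian.Ext.mk₀ (ModuleCat.ofHom
          (Algebra.lmul (B ⊗[A] B) B (Algebra.TensorProduct.lmul' A (S := B) x)))).comp e
        (zero_add i) = 0 := by
  let : Algebra (B ⊗[A] B) B := (Algebra.TensorProduct.lmul' A (S := B)).toRingHom.toAlgebra
  -- Shadows the `ModuleCat` instance, whose `Ext` lives in `Type u` instead of `Type (u + 1)`.
  have : HasExt.{u + 1} (ModuleCat.{u} (B ⊗[A] B)) := HasExt.standard _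
  have m_surjective : Function.Surjective (Algebra.linearMap (B ⊗[A] B) B) :=
    fun b => ⟨b ⊗ₜ 1, (Algebra.TensorProduct.lmul'_apply_tmul b 1).trans (mul_one b)⟩
  exact D_annihilates_higher_ext_general (N := N) m_surjective
    (Submodule.mem_annihilator.mpr hx) hi
end
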